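/- Let g ≥ 2 and let Γ be the group with presentation ⟨x₁, y₁, …, x_g, y_g ∣ [x₁,y₁][x₂,y₂]⋯[x_g,y_g] = 1⟩ (the surface group of genus g). Let A and B be finite groups, α: A ↠ B a surjective homomorphism with kernel K, f: Γ ↠ B a surjective homomorphism, and φ: Γ → A a homomorphism with α∘φ = f. Let s be the minimal number of generators of K and let n be the order of the subgroup K·φ(Γ) of A. Assume that g ≥ sn + s, that φ(x₁) = φ(x₂) = ⋯ = φ(x_{sn+s}), and that φ(y₁) = φ(y₂) = ⋯ = φ(y_{sn+s}). Then there exists a surjective homomorphism ψ: Γ ↠ A with α∘ψ = f. -/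

import Mathlib

open Filter Topology

noncomputable section

/-- The commutator `[x,y] = x⁻¹y⁻¹xy`. -/
def pComm {G : Type} [Group G] (a b : G) : G := a⁻¹ * b⁻¹ * a * b

/-- The surface relation `[x₁,y₁][x₂,y₂]⋯[x_g,y_g]` in the free group on the `2g` generators
`x_i = (i, true)`, `y_i = (i, false)`. -/
def surfaceRel (g : ℕ) : FreeGroup (Fin g × Bool) :=
  (List.ofFn fun i : Fin g =>
    pComm (FreeGroup.of (i, true)) (FreeGroup.of (i, false))).prod

/-- The surface group of genus `g`:
`⟨x₁, y₁, …, x_g, y_g ∣ [x₁,y₁][x₂,y₂]⋯[x_g,y_g] = 1⟩`. -/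
abbrev SurfaceGroup (g : ℕ) : Type :=
  PresentedGroup ({surfaceRel g} : Set (FreeGroup (Fin g × Bool)))

/-- The generator `x_i` of the surface group. -/
def sgX (g : ℕ) (i : Fin g) : SurfaceGroup g := PresentedGroup.of (i, true)

/-- The generator `y_i` of the surface group. -/
def sgY (g : ℕ) (i : Fin g) : SurfaceGroup g := PresentedGroup.of (i, false)

/-- The minimal number of generators of a group. -/
def minGens (G : Type) [Group G] : ℕ :=
  sInf {n | ∃ S : Finset G, S.card = n ∧ Subgroup.closure (S : Set G) = ⊤}

end

/-- Product of the first `m` values of a sequence. -/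
def sgPartial {G : Type} [Group G] (u : ℕ → G) (m : ℕ) : G := ((List.range m).map u).prod

theorem sgPartial_succ {G : Type} [Group G] (u : ℕ → G) (m : ℕ) :
    sgPartial u (m + 1) = sgPartial u m * u m := by
  simp [sgPartial, List.range_succ]

theorem sgPartial_block {G : Type} [Group G] (u : ℕ → G) (n s : ℕ) (d : ℕ → G)
    (hd : ∀ j, d j ^ n = 1) (hu : ∀ j r, j < s → r < n → u (j * n + r) = d j) :
    ∀ j, j ≤ s → sgPartial u (j * n) = 1 := by
  intro j
  induction j with
  | zero => intro _; simp [sgPartial]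
  | succ j ih =>
    intro hj
    have h : ∀ r, r ≤ n → sgPartial u (j * n + r) = d j ^ r := by
      intro r
      induction r with
      | zero => intro _; simpa using ih (by omega)
      | succ r ihr =>
        intro hr
        rw [← add_assoc, sgPartial_succ, ihr (by omega), hu j r (by omega) (by omega), pow_succ]
    rw [Nat.succ_mul, h n le_rfl, hd]

theorem sgPartial_tail {G : Type} [Group G] (u v : ℕ → G) (m : ℕ)
    (h : sgPartial u m = sgPartial v m) (huv : ∀ i, m ≤ i → u i = v i) (g : ℕ) (hg : m ≤ g) :
    sgPartial u g = sgPartial v g := by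
  induction g, hg using Nat.le_induction with
  | base => exact h
  | succ k hk ih => rw [sgPartial_succ, sgPartial_succ, ih, huv k hk]

theorem sg_lift_rel {G : Type} [Group G] (g : ℕ) (X Y : ℕ → G) :
    FreeGroup.lift (fun p : Fin g × Bool => if p.2 then X p.1 else Y p.1) (surfaceRel g)
      = sgPartial (fun i => pComm (X i) (Y i)) g := by
  unfold surfaceRel sgPartial
  rw [map_list_prod, List.map_ofFn]
  congr 1
  apply List.ext_getElem
  · simp
  · intro i h1 h2
    simp [pComm]

theorem exists_gens (G : Type) [Group G] [Finite G] :
    ∃ k : ℕ → G, Subgroup.closure {a | ∃ j, j < minGens G ∧ a = k j} = ⊤ := by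
  classical
  have := Fintype.ofFinite G
  have hne : {n | ∃ S : Finset G, S.card = n ∧ Subgroup.closure (S : Set G) = ⊤}.Nonempty :=
    ⟨_, Finset.univ, rfl, by simp⟩
  obtain ⟨S, hc, hS⟩ := Nat.sInf_mem hne
  refine ⟨fun j => S.toList.getD j 1, ?_⟩
  rw [← top_le_iff, ← hS]
  apply Subgroup.closure_mono
  intro a ha
  have ha' : a ∈ S.toList := by simpa using ha
  obtain ⟨j, hj, rfl⟩ := List.getElem_of_mem ha'
  refine ⟨j, ?_, ?_⟩
  · rw [Finset.length_toList, hc] at hj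
    exact hj
  · exact (List.getD_eq_getElem _ _ hj).symm

/-- **Lemma.** Let `Γ` be the surface group of genus `g ≥ 2`, `α : A ↠ B` a surjection of
finite groups with kernel `K`, `f : Γ ↠ B` a surjection, and `φ : Γ → A` a homomorphism with
`α ∘ φ = f` (a weak solution).  Let `s` be the minimal number of generators of `K` and
`n = |K·φ(Γ)|`.  If `g ≥ sn + s` and `φ(x₁) = ⋯ = φ(x_{sn+s})`,
`φ(y₁) = ⋯ = φ(y_{sn+s})`, then the embedding problem has a proper solution: there is a
surjection `ψ : Γ ↠ A` with `α ∘ ψ = f`. -/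
theorem surface_group_embedding_problem_proper_solution
    (g : ℕ) (hg : 2 ≤ g)
    (A B : Type) [Group A] [Group B] [Finite A] [Finite B]
    (α : A →* B) (hα : Function.Surjective α)
    (f : SurfaceGroup g →* B) (hf : Function.Surjective f)
    (φ : SurfaceGroup g →* A) (hweak : α.comp φ = f)
    (s n : ℕ) (hs : s = minGens ↥(MonoidHom.ker α))
    (hn : n = Nat.card ↥(MonoidHom.ker α ⊔ MonoidHom.range φ))
    (hgenus : s * n + s ≤ g)
    (hx : ∀ i j : Fin g, (i : ℕ) < s * n + s → (j : ℕ) < s * n + s →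
      φ (sgX g i) = φ (sgX g j))
    (hy : ∀ i j : Fin g, (i : ℕ) < s * n + s → (j : ℕ) < s * n + s →
      φ (sgY g i) = φ (sgY g j)) :
    ∃ ψ : SurfaceGroup g →* A, Function.Surjective ψ ∧ α.comp ψ = f := by
  classical
  subst hweak
  subst hs
  have htop : MonoidHom.ker α ⊔ MonoidHom.range φ = ⊤ := by
    rw [eq_top_iff]
    intro a _
    obtain ⟨γ, hγ⟩ := hf (α a)
    have : a = (a * (φ γ)⁻¹) * φ γ := by group
    rw [this]
    refine Subgroup.mul_mem_sup ?_ ⟨γ, rfl⟩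
    rw [MonoidHom.mem_ker, map_mul, map_inv, ← hγ]
    simp
  have hpow : ∀ a : A, a ^ n = 1 := by
    intro a
    rw [hn, htop, Subgroup.card_top]
    exact pow_card_eq_one'
  have hnpos : 0 < n := by rw [hn]; exact Nat.card_pos
  obtain ⟨k, hk⟩ := exists_gens ↥(MonoidHom.ker α)
  set s := minGens ↥(MonoidHom.ker α)
  let X₀ : ℕ → A := fun i => if h : i < g then φ (sgX g ⟨i, h⟩) else 1
  let Y₀ : ℕ → A := fun i => if h : i < g then φ (sgY g ⟨i, h⟩) else 1
  let X : ℕ → A := fun i => if i < s * n then X₀ i * k (i / n) else X₀ i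
  have hX₀ : ∀ i, i < s * n → X₀ i = X₀ 0 := by
    intro i hi
    have h1 : i < g := by omega
    have h0 : 0 < g := by omega
    simp only [X₀, h1, h0, dif_pos]
    exact hx _ _ (by dsimp only; omega) (by dsimp only; omega)
  have hY₀ : ∀ i, i < s * n → Y₀ i = Y₀ 0 := by
    intro i hi
    have h1 : i < g := by omega
    have h0 : 0 < g := by omega
    simp only [Y₀, h1, h0, dif_pos]
    exact hy _ _ (by dsimp only; omega) (by dsimp only; omega)
  have hlt : ∀ j r, j < s → r < n → j * n + r < s * n := by
    intro j r hj hr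
    have : (j + 1) * n ≤ s * n := Nat.mul_le_mul_right n hj
    rw [Nat.succ_mul] at this
    omega
  have hdiv : ∀ j r, r < n → (j * n + r) / n = j := by
    intro j r hr
    rw [mul_comm, Nat.mul_add_div hnpos, Nat.div_eq_of_lt hr, add_zero]
  have e1 : sgPartial (fun i => pComm (X i) (Y₀ i)) (s * n) = 1 := by
    refine sgPartial_block _ n s (fun j => pComm (X₀ 0 * k j) (Y₀ 0)) (fun _ => hpow _) ?_ s le_rfl
    intro j r hj hr
    have := hlt j r hj hr
    simp only [X, this, if_true, hX₀ _ this, hY₀ _ this, hdiv j r hr]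
  have e2 : sgPartial (fun i => pComm (X₀ i) (Y₀ i)) (s * n) = 1 := by
    refine sgPartial_block _ n s (fun j => pComm (X₀ 0) (Y₀ 0)) (fun _ => hpow _) ?_ s le_rfl
    intro j r hj hr
    have := hlt j r hj hr
    simp only [hX₀ _ this, hY₀ _ this]
  have e3 : sgPartial (fun i => pComm (X₀ i) (Y₀ i)) g = 1 := by
    rw [← sg_lift_rel]
    have h : FreeGroup.lift (fun p : Fin g × Bool => if p.2 then X₀ p.1 else Y₀ p.1)
        = φ.comp (PresentedGroup.mk {surfaceRel g}) := by
      ext ⟨i, b⟩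
      cases b <;> simp [X₀, Y₀, sgX, sgY, PresentedGroup.of]
    rw [h, MonoidHom.comp_apply, PresentedGroup.one_of_mem (Set.mem_singleton _), map_one]
  have e4 : sgPartial (fun i => pComm (X i) (Y₀ i)) g = 1 := by
    rw [← e3]
    refine sgPartial_tail _ _ (s * n) (e1.trans e2.symm) ?_ g (by omega)
    intro i hi
    simp only [X, not_lt.mpr hi, if_false]
  let F : Fin g × Bool → A := fun p => if p.2 then X p.1 else Y₀ p.1
  have hF : ∀ r ∈ ({surfaceRel g} : Set (FreeGroup (Fin g × Bool))), FreeGroup.lift F r = 1 := by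
    intro r hr
    rw [Set.mem_singleton_iff.mp hr]
    exact (sg_lift_rel g X Y₀).trans e4
  let ψ : SurfaceGroup g →* A := PresentedGroup.toGroup hF
  have hψX : ∀ i : Fin g, ψ (sgX g i) = X i := by
    intro i
    have : ψ (sgX g i) = F (i, true) := PresentedGroup.toGroup.of hF
    simpa [F] using this
  have hψY : ∀ i : Fin g, ψ (sgY g i) = Y₀ i := by
    intro i
    have : ψ (sgY g i) = F (i, false) := PresentedGroup.toGroup.of hF
    simpa [F] using this
  have hcomp : α.comp ψ = α.comp φ := by
    apply PresentedGroup.ext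
    rintro ⟨i, b⟩
    cases b
    · change α (ψ (sgY g i)) = α (φ (sgY g i))
      rw [hψY]
      simp [Y₀]
    · change α (ψ (sgX g i)) = α (φ (sgX g i))
      rw [hψX]
      have hker : ∀ j, α (k j) = 1 := fun j => (k j).2
      by_cases h : (i : ℕ) < s * n
      · simp [X, X₀, h, hker]
      · simp [X, X₀, h]
  refine ⟨ψ, ?_, hcomp⟩
  have hkr : ∀ j, j < s → (k j : A) ∈ ψ.range := by
    intro j hj
    have h1 : j * n < s * n := by simpa using hlt j 0 hj hnpos
    have hg1 : j * n < g := by omega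
    have hg2 : s * n < g := by omega
    have m1 : X (j * n) ∈ ψ.range := ⟨_, hψX ⟨j * n, hg1⟩⟩
    have m2 : X (s * n) ∈ ψ.range := ⟨_, hψX ⟨s * n, hg2⟩⟩
    have q1 : X (j * n) = X₀ (j * n) * k j := by
      simp [X, h1, Nat.mul_div_cancel _ hnpos]
    have q2 : X (s * n) = X₀ (j * n) := by
      simp only [X, lt_irrefl, if_false, X₀, hg1, hg2, dif_pos]
      exact hx _ _ (by dsimp only; omega) (by dsimp only; omega)
    rw [q1] at m1
    rw [q2] at m2
    exact (Subgroup.mul_mem_cancel_left _ m2).mp m1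
  have hKr : MonoidHom.ker α ≤ ψ.range := by
    have h : (⊤ : Subgroup ↥(MonoidHom.ker α)) ≤ ψ.range.comap (MonoidHom.ker α).subtype := by
      rw [← hk, Subgroup.closure_le]
      rintro a ⟨j, hj, rfl⟩
      exact hkr j hj
    intro a ha
    exact h (Subgroup.mem_top (⟨a, ha⟩ : ↥(MonoidHom.ker α)))
  intro a
  obtain ⟨γ, hγ⟩ := hf (α a)
  rw [← hcomp] at hγ
  have hm : a * (ψ γ)⁻¹ ∈ ψ.range := by
    apply hKr
    rw [MonoidHom.mem_ker, map_mul, map_inv, ← hγ]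
    simp
  have := Subgroup.mul_mem _ hm (⟨γ, rfl⟩ : ψ γ ∈ ψ.range)
  rw [inv_mul_cancel_right] at this
  exact this
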